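/- arXiv:2108.10214 — 3 statements merged into one kernel-verified Lean document; each statement's English description precedes it below -/
import Mathlib

section
/- With the notation of the iterated integrals Ω at φ = π/4, one has Ω_{2,1} = −iπ·log 2, i.e. ∫₀¹ F₁(t₂)·(∫₀^{t₂} F₂(t₁) dt₁) dt₂ = −iπ·log 2. -/
noncomputable section

/-- `p₁ = e^{iπ/4}` -/
def p₁ : ℂ := Complex.exp (Complex.I * ((Real.pi : ℂ) / 4))
/-- `p₂ = -e^{-iπ/4}` -/
def p₂ : ℂ := -Complex.exp (-(Complex.I * ((Real.pi : ℂ) / 4)))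
/-- `p₃ = -p₁` -/
def p₃ : ℂ := -p₁
/-- `p₄ = -p₂` -/
def p₄ : ℂ := -p₂

def F₁ (z : ℂ) : ℂ := 1 / (z - p₁) - 1 / (z - p₂) + 1 / (z - p₃) - 1 / (z - p₄)

def F₂ (z : ℂ) : ℂ := 1 / (z - p₁) - 1 / (z - p₂) - 1 / (z - p₃) + 1 / (z - p₄)

def F₃ (z : ℂ) : ℂ := 1 / (z - p₁) + 1 / (z - p₂) - 1 / (z - p₃) - 1 / (z - p₄)

/-- Iterated integral along `[0, z]`:
`Omega [F_{i₁}, …, F_{iₙ}] z = Ω_{i₁,…,iₙ}(z)`, defined recursively by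
`Ω_{i₁,…,i_k}(z) = ∫₀ᶻ Ω_{i₁,…,i_{k-1}}(t) · F_{i_k}(t) dt`, with `Ω_∅ ≡ 1`. -/
def Omega (fs : List (ℂ → ℂ)) : ℝ → ℂ :=
  fs.foldl (fun g f => fun z => ∫ t in (0:ℝ)..z, g t * f (t : ℂ)) (fun _ => 1)

lemma aux_s : (√2 : ℝ) ^ 2 = 2 := Real.sq_sqrt (by norm_num)

lemma aux_s1 : (1.4 : ℝ) < √2 := by
  apply Real.lt_sqrt_of_sq_lt; norm_num

lemma aux_s2 : (√2 : ℝ) < 1.5 := by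
  rw [Real.sqrt_lt' (by norm_num)]; norm_num

lemma aux_exp : Complex.exp (Complex.I * ((Real.pi : ℂ) / 4)) =
    ((√2 / 2 : ℝ) : ℂ) + ((√2 / 2 : ℝ) : ℂ) * Complex.I := by
  have h : Complex.I * ((Real.pi : ℂ) / 4) = ((Real.pi / 4 : ℝ) : ℂ) * Complex.I := by
    push_cast; ring
  rw [h, Complex.exp_mul_I, ← Complex.ofReal_cos, ← Complex.ofReal_sin, Real.cos_pi_div_four,
    Real.sin_pi_div_four]

lemma aux_exp' : Complex.exp (-(Complex.I * ((Real.pi : ℂ) / 4))) =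
    ((√2 / 2 : ℝ) : ℂ) - ((√2 / 2 : ℝ) : ℂ) * Complex.I := by
  have h : -(Complex.I * ((Real.pi : ℂ) / 4)) = ((-(Real.pi / 4) : ℝ) : ℂ) * Complex.I := by
    push_cast; ring
  rw [h, Complex.exp_mul_I, ← Complex.ofReal_cos, ← Complex.ofReal_sin, Real.cos_neg, Real.sin_neg,
    Real.cos_pi_div_four, Real.sin_pi_div_four]
  push_cast; ring

lemma aux_ne (t a b : ℝ) (hb : b ≠ 0) : (t : ℂ) - ((a : ℂ) + (b : ℂ) * Complex.I) ≠ 0 := by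
  intro h
  have := congrArg Complex.im h
  simp at this
  exact hb this

lemma aux_F (t : ℝ) : F₁ t = Complex.I * ((4 * t / (t ^ 4 + 1) : ℝ) : ℂ) ∧
    F₂ t = ((2 * √2 * (t ^ 2 - 1) / (t ^ 4 + 1) : ℝ) : ℂ) := by
  have hs := aux_s
  have hs0 : (√2 / 2 : ℝ) ≠ 0 := by positivity
  obtain ⟨r, hr⟩ : ∃ r : ℝ, r = √2 / 2 := ⟨_, rfl⟩
  have hr2 : 2 * r ^ 2 = 1 := by rw [hr]; nlinarith
  have hs' : √2 = 2 * r := by rw [hr]; ring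
  have hr0 : r ≠ 0 := by rw [hr]; exact hs0
  have hrc : 2 * (r : ℂ) ^ 2 = 1 := by exact_mod_cast hr2
  have hI : Complex.I ^ 2 = -1 := Complex.I_sq
  have e1 : (t : ℂ) - p₁ ≠ 0 := by
    rw [p₁, aux_exp, ← hr]; exact aux_ne t r r hr0
  have e2 : (t : ℂ) - p₂ ≠ 0 := by
    have := aux_ne t (-r) r hr0
    rw [p₂, aux_exp', ← hr]; convert this using 2; push_cast; ring
  have e3 : (t : ℂ) - p₃ ≠ 0 := by
    have := aux_ne t (-r) (-r) (neg_ne_zero.2 hr0)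
    rw [p₃, p₁, aux_exp, ← hr]; convert this using 2; push_cast; ring
  have e4 : (t : ℂ) - p₄ ≠ 0 := by
    have := aux_ne t r (-r) (neg_ne_zero.2 hr0)
    rw [p₄, p₂, aux_exp', ← hr]; convert this using 2; push_cast; ring
  have h1 : p₁ = r + r * Complex.I := by rw [p₁, aux_exp, ← hr]
  have h2 : p₂ = -r + r * Complex.I := by rw [p₂, aux_exp', ← hr]; ring
  have h3 : p₃ = -p₁ := rfl
  have h4 : p₄ = -p₂ := rfl
  have q1 : p₁ ^ 2 = Complex.I := by rw [h1]; grind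
  have q2 : p₂ ^ 2 = -Complex.I := by rw [h2]; grind
  have d1 : (t : ℂ) ^ 2 - Complex.I ≠ 0 := by
    have : (t : ℂ) ^ 2 - Complex.I = (t - p₁) * (t - p₃) := by rw [h3, ← q1]; ring
    rw [this]; exact mul_ne_zero e1 e3
  have d2 : (t : ℂ) ^ 2 + Complex.I ≠ 0 := by
    have : (t : ℂ) ^ 2 + Complex.I = (t - p₂) * (t - p₄) := by rw [h4]; grind
    rw [this]; exact mul_ne_zero e2 e4
  have d0 : (t : ℂ) ^ 4 + 1 = (t ^ 2 - Complex.I) * (t ^ 2 + Complex.I) := by grind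
  have d3 : (t : ℂ) ^ 4 + 1 ≠ 0 := by rw [d0]; exact mul_ne_zero d1 d2
  have a1 : 1 / ((t : ℂ) - p₁) + 1 / (t - p₃) = 2 * t / (t ^ 2 - Complex.I) := by
    rw [div_add_div _ _ e1 e3, div_eq_div_iff (mul_ne_zero e1 e3) d1, h3, ← q1]; ring
  have a2 : 1 / ((t : ℂ) - p₁) - 1 / (t - p₃) = 2 * p₁ / (t ^ 2 - Complex.I) := by
    rw [div_sub_div _ _ e1 e3, div_eq_div_iff (mul_ne_zero e1 e3) d1, h3, ← q1]; ring
  have q2' : Complex.I = -p₂ ^ 2 := by rw [q2]; ring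
  have a3 : 1 / ((t : ℂ) - p₂) + 1 / (t - p₄) = 2 * t / (t ^ 2 + Complex.I) := by
    rw [div_add_div _ _ e2 e4, div_eq_div_iff (mul_ne_zero e2 e4) d2, h4, q2']; ring
  have a4 : 1 / ((t : ℂ) - p₂) - 1 / (t - p₄) = 2 * p₂ / (t ^ 2 + Complex.I) := by
    rw [div_sub_div _ _ e2 e4, div_eq_div_iff (mul_ne_zero e2 e4) d2, h4, q2']; ring
  constructor
  · have : F₁ t = (1 / ((t : ℂ) - p₁) + 1 / (t - p₃)) - (1 / ((t : ℂ) - p₂) + 1 / (t - p₄)) := by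
      rw [F₁]; ring
    rw [this, a1, a3, div_sub_div _ _ d1 d2]
    push_cast
    rw [d0]; ring
  · have : F₂ t = (1 / ((t : ℂ) - p₁) - 1 / (t - p₃)) - (1 / ((t : ℂ) - p₂) - 1 / (t - p₄)) := by
      rw [F₂]; ring
    rw [this, a2, a4, div_sub_div _ _ d1 d2, hs']
    push_cast
    rw [d0]
    congr 1
    rw [h1, h2]; grind

lemma aux_pos (t u : ℝ) (ht0 : 0 ≤ t) (ht : t ≤ 1) (hu0 : 0 ≤ u) (hu : u < 1) :
    0 < (1 + t ^ 2) * (1 + u ^ 2) - 4 * u * t ∧ 0 < (1 + t ^ 2) * (1 + u ^ 2) + 4 * u * t := by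
  have h1 : 0 < 1 - t * u := by nlinarith
  constructor
  · nlinarith [sq_nonneg (t - u), sq_nonneg (1 - t * u), mul_pos h1 h1]
  · positivity

/-- the u-derivative of the logarithm -/
def gg (t u : ℝ) : ℝ := (2 * u * (1 + t ^ 2) + 4 * t) / ((1 + t ^ 2) * (1 + u ^ 2) + 4 * u * t) -
  (2 * u * (1 + t ^ 2) - 4 * t) / ((1 + t ^ 2) * (1 + u ^ 2) - 4 * u * t)

lemma aux_int_u (t : ℝ) (ht0 : 0 ≤ t) (ht : t ≤ 1) :
    ∫ u in (0:ℝ)..(√2 - 1), gg t u = Real.log (t ^ 2 + √2 * t + 1) - Real.log (t ^ 2 - √2 * t + 1) := by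
  have hs := aux_s
  have hs1 := aux_s1
  have hs2 := aux_s2
  have hI : Set.uIcc (0:ℝ) (√2 - 1) = Set.Icc 0 (√2 - 1) := Set.uIcc_of_le (by linarith)
  have key := intervalIntegral.integral_eq_sub_of_hasDerivAt (a := (0:ℝ)) (b := √2 - 1)
    (f := fun u => Real.log ((1 + t ^ 2) * (1 + u ^ 2) + 4 * u * t) -
      Real.log ((1 + t ^ 2) * (1 + u ^ 2) - 4 * u * t)) (f' := gg t) ?_ ?_
  · rw [key]
    have e1 : (1 + t ^ 2) * (1 + (√2 - 1) ^ 2) + 4 * (√2 - 1) * t =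
      (2 * √2 * (√2 - 1)) * (t ^ 2 + √2 * t + 1) := by grind
    have e2 : (1 + t ^ 2) * (1 + (√2 - 1) ^ 2) - 4 * (√2 - 1) * t =
      (2 * √2 * (√2 - 1)) * (t ^ 2 - √2 * t + 1) := by grind
    have n0 : 2 * √2 * (√2 - 1) ≠ 0 := by nlinarith
    have n1 : t ^ 2 + √2 * t + 1 ≠ 0 := by positivity
    have n2 : t ^ 2 - √2 * t + 1 ≠ 0 := by nlinarith [sq_nonneg (t - √2 / 2)]
    simp only [e1, e2]
    rw [Real.log_mul n0 n1, Real.log_mul n0 n2]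
    simp
  · intro u hu
    rw [hI] at hu
    obtain ⟨h1, h2⟩ := aux_pos t u ht0 ht hu.1 (by linarith [hu.2])
    have d1 : HasDerivAt (fun u : ℝ => (1 + t ^ 2) * (1 + u ^ 2) + 4 * u * t)
        (2 * u * (1 + t ^ 2) + 4 * t) u := by
      have := ((((hasDerivAt_id u).pow 2).const_add 1).const_mul (1 + t ^ 2)).add
        (((hasDerivAt_id u).const_mul 4).mul_const t)
      refine this.congr_deriv ?_
      simp; ring
    have d2 : HasDerivAt (fun u : ℝ => (1 + t ^ 2) * (1 + u ^ 2) - 4 * u * t)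
        (2 * u * (1 + t ^ 2) - 4 * t) u := by
      have := ((((hasDerivAt_id u).pow 2).const_add 1).const_mul (1 + t ^ 2)).sub
        (((hasDerivAt_id u).const_mul 4).mul_const t)
      refine this.congr_deriv ?_
      simp; ring
    exact (d1.log h2.ne').sub (d2.log h1.ne')
  · apply ContinuousOn.intervalIntegrable
    rw [hI]
    unfold gg
    apply ContinuousOn.sub <;> apply ContinuousOn.div (by fun_prop) (by fun_prop) <;> intro u hu
    · exact (aux_pos t u ht0 ht hu.1 (by linarith [hu.2])).2.ne'
    · exact (aux_pos t u ht0 ht hu.1 (by linarith [hu.2])).1.ne'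

lemma aux_int_F2 (z : ℝ) :
    ∫ t in (0:ℝ)..z, 2 * √2 * (t ^ 2 - 1) / (t ^ 4 + 1) =
      -(Real.log (z ^ 2 + √2 * z + 1) - Real.log (z ^ 2 - √2 * z + 1)) := by
  have hs := aux_s
  have key := intervalIntegral.integral_eq_sub_of_hasDerivAt (a := (0:ℝ)) (b := z)
    (f := fun z => -(Real.log (z ^ 2 + √2 * z + 1) - Real.log (z ^ 2 - √2 * z + 1)))
    (f' := fun t => 2 * √2 * (t ^ 2 - 1) / (t ^ 4 + 1)) ?_ ?_
  · rw [key]; simp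
  · intro t _
    have n1 : t ^ 2 + √2 * t + 1 ≠ 0 := by nlinarith [sq_nonneg (t + √2 / 2)]
    have n2 : t ^ 2 - √2 * t + 1 ≠ 0 := by nlinarith [sq_nonneg (t - √2 / 2)]
    have d1 : HasDerivAt (fun t : ℝ => t ^ 2 + √2 * t + 1) (2 * t + √2) t := by
      have := (((hasDerivAt_id t).pow 2).add ((hasDerivAt_id t).const_mul √2)).add_const 1
      refine this.congr_deriv ?_
      simp
    have d2 : HasDerivAt (fun t : ℝ => t ^ 2 - √2 * t + 1) (2 * t - √2) t := by
      have := (((hasDerivAt_id t).pow 2).sub ((hasDerivAt_id t).const_mul √2)).add_const 1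
      refine this.congr_deriv ?_
      simp
    refine ((d1.log n1).sub (d2.log n2)).neg.congr_deriv ?_
    have e : t ^ 4 + 1 = (t ^ 2 + √2 * t + 1) * (t ^ 2 - √2 * t + 1) := by grind
    rw [e, div_sub_div _ _ n1 n2, ← neg_div]
    congr 1
    grind
  · apply Continuous.intervalIntegrable
    apply Continuous.div (by fun_prop) (by fun_prop)
    intro x; positivity

lemma aux_int_t (u : ℝ) (hu0 : 0 ≤ u) (hu : u < √2 - 1) :
    ∫ t in (0:ℝ)..1, 4 * t / (t ^ 4 + 1) * gg t u =
      2 * Real.pi * (1 / (√2 + 1 + u) + 1 / (√2 + 1 - u)) := by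
  have hs := aux_s
  have hs1 := aux_s1
  have hs2 := aux_s2
  have hI : Set.uIcc (0:ℝ) 1 = Set.Icc 0 1 := Set.uIcc_of_le (by norm_num)
  have hu1 : u < 1 := by linarith
  have hw : 0 < 1 - u ^ 2 := by nlinarith
  have hE : (1 + u ^ 2) ^ 2 - 8 * u ^ 2 ≠ 0 := by
    have a : (1 + u ^ 2) ^ 2 - 8 * u ^ 2 =
      (√2 - 1 - u) * (√2 + 1 - u) * ((√2 - 1 + u) * (√2 + 1 + u)) := by grind
    rw [a]
    have b1 : 0 < √2 - 1 - u := by linarith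
    have b2 : 0 < √2 + 1 - u := by linarith
    have b3 : 0 < √2 - 1 + u := by linarith
    positivity
  have key := intervalIntegral.integral_eq_sub_of_hasDerivAt (a := (0:ℝ)) (b := 1)
    (f := fun t => 16 * (1 - u ^ 2) / ((1 + u ^ 2) ^ 2 - 8 * u ^ 2) *
      ((Real.arctan (√2 * t + 1) + Real.arctan (√2 * t - 1)) / √2 -
       (1 + u ^ 2) / (2 * (1 - u ^ 2)) * (Real.arctan (((1 + u ^ 2) * t + 2 * u) / (1 - u ^ 2)) +
        Real.arctan (((1 + u ^ 2) * t - 2 * u) / (1 - u ^ 2)))))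
    (f' := fun t => 4 * t / (t ^ 4 + 1) * gg t u) ?_ ?_
  · rw [key]
    have a1 : Real.arctan (√2 * 1 + 1) + Real.arctan (√2 * 1 - 1) = Real.pi / 2 := by
      have : √2 * 1 - 1 = (√2 * 1 + 1)⁻¹ := by
        apply eq_inv_of_mul_eq_one_left; grind
      rw [this, Real.arctan_inv_of_pos (by positivity)]; ring
    have a2 : Real.arctan (((1 + u ^ 2) * 1 + 2 * u) / (1 - u ^ 2)) +
        Real.arctan (((1 + u ^ 2) * 1 - 2 * u) / (1 - u ^ 2)) = Real.pi / 2 := by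
      have h0 : 0 < ((1 + u ^ 2) * 1 + 2 * u) / (1 - u ^ 2) := by positivity
      have : ((1 + u ^ 2) * 1 - 2 * u) / (1 - u ^ 2) = (((1 + u ^ 2) * 1 + 2 * u) / (1 - u ^ 2))⁻¹ := by
        rw [inv_div, div_eq_div_iff hw.ne' (by positivity)]; ring
      rw [this, Real.arctan_inv_of_pos h0]; ring
    have a3 : Real.arctan (√2 * 0 + 1) + Real.arctan (√2 * 0 - 1) = 0 := by
      have : √2 * 0 - 1 = -(√2 * 0 + 1) := by ring
      rw [this, Real.arctan_neg]; ring
    have a4 : Real.arctan (((1 + u ^ 2) * 0 + 2 * u) / (1 - u ^ 2)) +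
        Real.arctan (((1 + u ^ 2) * 0 - 2 * u) / (1 - u ^ 2)) = 0 := by
      have : ((1 + u ^ 2) * 0 - 2 * u) / (1 - u ^ 2) = -(((1 + u ^ 2) * 0 + 2 * u) / (1 - u ^ 2)) := by
        ring
      rw [this, Real.arctan_neg]; ring
    simp only [a1, a2, a3, a4]
    have b2 : √2 + 1 - u ≠ 0 := by linarith
    have b3 : √2 + 1 + u ≠ 0 := by linarith
    have b4 : √2 ≠ 0 := by positivity
    have hw' := hw.ne'
    clear key a1 a2 a3 a4 hI
    generalize Real.pi = π
    have hk : (1 / (√2 + 1 + u) + 1 / (√2 + 1 - u)) = 2 * (√2 + 1) / ((√2 + 1 + u) * (√2 + 1 - u)) := by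
      field_simp; ring
    have hl : 16 * (1 - u ^ 2) / ((1 + u ^ 2) ^ 2 - 8 * u ^ 2) * (π / 2 / √2 - (1 + u ^ 2) / (2 * (1 - u ^ 2)) * (π / 2))
       = 4 * π * (√2 * (1 - u ^ 2) - (1 + u ^ 2)) / ((1 + u ^ 2) ^ 2 - 8 * u ^ 2) := by
      have : π / 2 / √2 = π * √2 / 4 := by field_simp; rw [hs]; ring
      rw [this]
      generalize (1 + u ^ 2) ^ 2 - 8 * u ^ 2 = E at *
      field_simp
      ring
    rw [hk, hl]
    simp only [zero_div, mul_zero, sub_zero]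
    rw [← mul_div_assoc, div_eq_div_iff hE (mul_ne_zero b3 b2)]
    linear_combination 4 * π * ((√2 + 1) - (√2 + 3) * u ^ 2) * hs
  · intro t ht
    rw [hI] at ht
    obtain ⟨h1, h2⟩ := aux_pos t u ht.1 ht.2 hu0 hu1
    have l1 : ∀ a b c : ℝ, HasDerivAt (fun t : ℝ => Real.arctan ((a * t + b) / c))
        (1 / (1 + ((a * t + b) / c) ^ 2) * (a / c)) t := by
      intro a b c
      have : HasDerivAt (fun t : ℝ => (a * t + b) / c) (a / c) t := by
        have := (((hasDerivAt_id t).const_mul a).add_const b).div_const c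
        refine this.congr_deriv ?_
        simp
      exact this.arctan
    have D1 := l1 √2 1 1
    have D2 := l1 √2 (-1) 1
    have D3 := l1 (1 + u ^ 2) (2 * u) (1 - u ^ 2)
    have D4 := l1 (1 + u ^ 2) (-(2 * u)) (1 - u ^ 2)
    simp only [div_one, ← sub_eq_add_neg] at D1 D2 D3 D4
    refine ((((D1.add D2).div_const √2).sub ((D3.add D4).const_mul
      ((1 + u ^ 2) / (2 * (1 - u ^ 2))))).const_mul
      (16 * (1 - u ^ 2) / ((1 + u ^ 2) ^ 2 - 8 * u ^ 2))).congr_deriv ?_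
    have n1 : t ^ 2 + √2 * t + 1 ≠ 0 := by nlinarith [sq_nonneg (t + √2 / 2)]
    have n2 : t ^ 2 - √2 * t + 1 ≠ 0 := by nlinarith [sq_nonneg (t - √2 / 2)]
    have e : t ^ 4 + 1 = (t ^ 2 + √2 * t + 1) * (t ^ 2 - √2 * t + 1) := by grind
    have c1 : 1 / (1 + (√2 * t + 1) ^ 2) * √2 = √2 / 2 / (t ^ 2 + √2 * t + 1) := by
      have : 1 + (√2 * t + 1) ^ 2 = 2 * (t ^ 2 + √2 * t + 1) := by grind
      rw [this]; field_simp
    have c2 : 1 / (1 + (√2 * t - 1) ^ 2) * √2 = √2 / 2 / (t ^ 2 - √2 * t + 1) := by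
      have : 1 + (√2 * t - 1) ^ 2 = 2 * (t ^ 2 - √2 * t + 1) := by grind
      rw [this]; field_simp
    have c3 : 1 / (1 + (((1 + u ^ 2) * t + 2 * u) / (1 - u ^ 2)) ^ 2) * ((1 + u ^ 2) / (1 - u ^ 2)) =
        (1 - u ^ 2) / ((1 + t ^ 2) * (1 + u ^ 2) + 4 * u * t) := by
      have : 1 + (((1 + u ^ 2) * t + 2 * u) / (1 - u ^ 2)) ^ 2 =
        (1 + u ^ 2) * ((1 + t ^ 2) * (1 + u ^ 2) + 4 * u * t) / (1 - u ^ 2) ^ 2 := by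
        field_simp; ring
      rw [this]; field_simp
    have c4 : 1 / (1 + (((1 + u ^ 2) * t - 2 * u) / (1 - u ^ 2)) ^ 2) * ((1 + u ^ 2) / (1 - u ^ 2)) =
        (1 - u ^ 2) / ((1 + t ^ 2) * (1 + u ^ 2) - 4 * u * t) := by
      have : 1 + (((1 + u ^ 2) * t - 2 * u) / (1 - u ^ 2)) ^ 2 =
        (1 + u ^ 2) * ((1 + t ^ 2) * (1 + u ^ 2) - 4 * u * t) / (1 - u ^ 2) ^ 2 := by
        field_simp; ring
      have h1' := h1.ne'
      rw [this]; field_simp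
    rw [c1, c2, c3, c4]
    have f1 : (√2 / 2 / (t ^ 2 + √2 * t + 1) + √2 / 2 / (t ^ 2 - √2 * t + 1)) / √2 =
        (1 + t ^ 2) / (t ^ 4 + 1) := by
      have hXY : (1 + t ^ 2) = ((t ^ 2 + √2 * t + 1) + (t ^ 2 - √2 * t + 1)) / 2 := by ring
      have b4 : √2 ≠ 0 := by positivity
      rw [e, hXY]
      generalize t ^ 2 + √2 * t + 1 = X at *
      generalize t ^ 2 - √2 * t + 1 = Y at *
      field_simp; ring
    rw [f1]
    unfold gg
    have h1' := h1.ne'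
    have h2' := h2.ne'
    have hw' := hw.ne'
    have h4 : t ^ 4 + 1 ≠ 0 := by positivity
    set P := (1 + t ^ 2) * (1 + u ^ 2) + 4 * u * t with hP
    set Q := (1 + t ^ 2) * (1 + u ^ 2) - 4 * u * t with hQ
    have k1 : (2 * u * (1 + t ^ 2) + 4 * t) / P - (2 * u * (1 + t ^ 2) - 4 * t) / Q =
        8 * t * (1 + t ^ 2) * (1 - u ^ 2) / (P * Q) := by
      rw [div_sub_div _ _ h2' h1']; congr 1; rw [hP, hQ]; ring
    have k2 : (1 - u ^ 2) / P + (1 - u ^ 2) / Q = 2 * (1 - u ^ 2) * (1 + t ^ 2) * (1 + u ^ 2) / (P * Q) := by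
      rw [div_add_div _ _ h2' h1']; congr 1; rw [hP, hQ]; ring
    have k3 : P * Q = (1 + u ^ 2) ^ 2 * (t ^ 4 + 1) + 2 * t ^ 2 * ((1 + u ^ 2) ^ 2 - 8 * u ^ 2) := by
      rw [hP, hQ]; ring
    have hPQ : P * Q ≠ 0 := mul_ne_zero h2' h1'
    rw [k1, k2]
    clear_value P Q
    generalize P * Q = D at *
    generalize (1 + u ^ 2) ^ 2 - 8 * u ^ 2 = E at *
    field_simp
    rw [k3]; ring
  · apply ContinuousOn.intervalIntegrable
    rw [hI]
    unfold gg
    apply ContinuousOn.mul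
    · apply ContinuousOn.div (by fun_prop) (by fun_prop); intro t _; positivity
    apply ContinuousOn.sub <;> apply ContinuousOn.div (by fun_prop) (by fun_prop) <;> intro t ht
    · exact (aux_pos t u ht.1 ht.2 hu0 hu1).2.ne'
    · exact (aux_pos t u ht.1 ht.2 hu0 hu1).1.ne'

lemma aux_int_final :
    ∫ u in (0:ℝ)..(√2 - 1), 2 * Real.pi * (1 / (√2 + 1 + u) + 1 / (√2 + 1 - u)) =
      Real.pi * Real.log 2 := by
  have hs := aux_s
  have hs1 := aux_s1
  have hs2 := aux_s2
  have hI : Set.uIcc (0:ℝ) (√2 - 1) = Set.Icc 0 (√2 - 1) := Set.uIcc_of_le (by linarith)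
  have key := intervalIntegral.integral_eq_sub_of_hasDerivAt (a := (0:ℝ)) (b := √2 - 1)
    (f := fun u => 2 * Real.pi * (Real.log (√2 + 1 + u) - Real.log (√2 + 1 - u)))
    (f' := fun u => 2 * Real.pi * (1 / (√2 + 1 + u) + 1 / (√2 + 1 - u))) ?_ ?_
  · rw [key]
    have e1 : √2 + 1 + (√2 - 1) = 2 * √2 := by ring
    have e2 : √2 + 1 - (√2 - 1) = 2 := by ring
    simp only [e1, e2]
    rw [Real.log_mul (by norm_num) (by positivity), Real.log_sqrt (by norm_num)]
    simp; ring
  · intro u hu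
    rw [hI] at hu
    have d1 : HasDerivAt (fun u : ℝ => √2 + 1 + u) 1 u := (hasDerivAt_id u).const_add _
    have d2 : HasDerivAt (fun u : ℝ => √2 + 1 - u) (-1) u := (hasDerivAt_id u).const_sub _
    refine (((d1.log (by linarith [hu.1])).sub (d2.log (by linarith [hu.2]))).const_mul
      (2 * Real.pi)).congr_deriv ?_
    ring
  · apply ContinuousOn.intervalIntegrable
    rw [hI]
    apply ContinuousOn.mul (by fun_prop)
    apply ContinuousOn.add <;> apply ContinuousOn.div (by fun_prop) (by fun_prop) <;> intro u hu
    · linarith [hu.1]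
    · linarith [hu.2]

lemma aux_double :
    ∫ t in (0:ℝ)..1, ∫ u in (0:ℝ)..(√2 - 1), 4 * t / (t ^ 4 + 1) * gg t u =
      Real.pi * Real.log 2 := by
  have hs1 := aux_s1
  have hs2 := aux_s2
  have h0 : (0:ℝ) ≤ √2 - 1 := by linarith
  have hsw : ∫ t in (0:ℝ)..1, ∫ u in (0:ℝ)..(√2 - 1), 4 * t / (t ^ 4 + 1) * gg t u =
      ∫ u in (0:ℝ)..(√2 - 1), ∫ t in (0:ℝ)..1, 4 * t / (t ^ 4 + 1) * gg t u := by
    simp only [intervalIntegral.integral_of_le h0,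
      intervalIntegral.integral_of_le (zero_le_one (α := ℝ))]
    apply MeasureTheory.integral_integral_swap
    rw [MeasureTheory.Measure.prod_restrict]
    have hc : ContinuousOn (Function.uncurry fun t u : ℝ => 4 * t / (t ^ 4 + 1) * gg t u)
        (Set.Icc (0:ℝ) 1 ×ˢ Set.Icc (0:ℝ) (√2 - 1)) := by
      unfold gg Function.uncurry
      apply ContinuousOn.mul
      · apply ContinuousOn.div (by fun_prop) (by fun_prop); intro t _; positivity
      apply ContinuousOn.sub <;> apply ContinuousOn.div (by fun_prop) (by fun_prop) <;>
        rintro ⟨t, u⟩ ⟨ht, hu⟩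
      · exact (aux_pos t u ht.1 ht.2 hu.1 (by linarith [hu.2])).2.ne'
      · exact (aux_pos t u ht.1 ht.2 hu.1 (by linarith [hu.2])).1.ne'
    have := hc.integrableOn_compact (μ := MeasureTheory.volume) (isCompact_Icc.prod isCompact_Icc)
    exact this.mono_set (Set.prod_mono Set.Ioc_subset_Icc_self Set.Ioc_subset_Icc_self)
  rw [hsw, ← aux_int_final]
  apply intervalIntegral.integral_congr_ae
  have : ∀ᵐ u : ℝ, u ≠ √2 - 1 := by
    simp [MeasureTheory.ae_iff]
  filter_upwards [this] with u hu hm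
  rw [Set.uIoc_of_le h0] at hm
  exact aux_int_t u hm.1.le (lt_of_le_of_ne hm.2 hu)

/- STATEMENT 10: `Ω_{2,1} = -iπ log 2`. -/
theorem stmt_10 :
    Omega [F₂, F₁] 1 = -Complex.I * (Real.pi : ℂ) * ((Real.log 2 : ℝ) : ℂ) := by
  have hO : Omega [F₂, F₁] 1 =
      ∫ t in (0:ℝ)..1, (∫ s in (0:ℝ)..t, 1 * F₂ (s : ℂ)) * F₁ (t : ℂ) := rfl
  rw [hO]
  have hc : ∀ t ∈ Set.uIcc (0:ℝ) 1, (∫ s in (0:ℝ)..t, 1 * F₂ (s : ℂ)) * F₁ (t : ℂ) =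
      -Complex.I * ((∫ u in (0:ℝ)..(√2 - 1), 4 * t / (t ^ 4 + 1) * gg t u : ℝ) : ℂ) := by
    intro t ht
    rw [Set.uIcc_of_le zero_le_one] at ht
    simp only [one_mul, fun s => (aux_F s).2]
    rw [intervalIntegral.integral_ofReal, aux_int_F2, (aux_F t).1,
      intervalIntegral.integral_const_mul, aux_int_u t ht.1 ht.2]
    push_cast
    ring
  rw [intervalIntegral.integral_congr hc, intervalIntegral.integral_const_mul,
    intervalIntegral.integral_ofReal, aux_double]
  push_cast
  ring
end
end

section
/- With the notation of the iterated integrals Ω at φ = π/4, one has Ω_{2,2,3} = iπ³/12. -/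
noncomputable section

open Real in
theorem aux_hasSum : HasSum (fun n : ℕ => (-1 : ℝ) ^ n / ((n : ℝ) + 1) ^ 2) (π ^ 2 / 12) := by
  have h0 : HasSum (fun n : ℕ => 1 / ((n : ℝ) + 1) ^ 2) (π ^ 2 / 6) := by
    have := (hasSum_nat_add_iff' 1).2 hasSum_zeta_two
    simpa using this
  have ho : HasSum (fun k : ℕ => 1 / (((2 * k + 1 : ℕ) : ℝ) + 1) ^ 2) (π ^ 2 / 24) := by
    have := h0.mul_left (1 / 4)
    rw [show 1 / 4 * (π ^ 2 / 6) = π ^ 2 / 24 by ring] at this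
    have e : (fun k : ℕ => 1 / (((2 * k + 1 : ℕ) : ℝ) + 1) ^ 2) =
        fun k : ℕ => 1 / 4 * (1 / ((k : ℝ) + 1) ^ 2) := by
      funext k
      push_cast
      have : (k : ℝ) + 1 ≠ 0 := by positivity
      rw [show 2 * (k : ℝ) + 1 + 1 = 2 * (k + 1) by ring]
      field_simp
      norm_num
    rw [e]
    exact this
  have hes : Summable (fun k : ℕ => 1 / (((2 * k : ℕ) : ℝ) + 1) ^ 2) :=
    h0.summable.comp_injective (i := fun k : ℕ => 2 * k) (fun a b h => by simpa using h)
  obtain ⟨e, he⟩ := hes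
  have h1 := HasSum.even_add_odd (f := fun n : ℕ => 1 / ((n : ℝ) + 1) ^ 2) he ho
  have h2 : e + π ^ 2 / 24 = π ^ 2 / 6 := h1.unique h0
  have h3 : π ^ 2 / 12 = e + -(π ^ 2 / 24) := by linarith
  rw [h3]
  apply HasSum.even_add_odd
  · have e : (fun k : ℕ => (-1 : ℝ) ^ (2 * k) / (((2 * k : ℕ) : ℝ) + 1) ^ 2) =
        fun k : ℕ => (1 / (((2 * k : ℕ) : ℝ) + 1) ^ 2) := by
      funext k
      rw [pow_mul]
      norm_num
    rw [e]
    exact he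
  · have e : (fun k : ℕ => (-1 : ℝ) ^ (2 * k + 1) / (((2 * k + 1 : ℕ) : ℝ) + 1) ^ 2) =
        fun k : ℕ => -(1 / (((2 * k + 1 : ℕ) : ℝ) + 1) ^ 2) := by
      funext k
      rw [pow_succ, pow_mul]
      norm_num
      ring
    rw [e]
    exact ho.neg

def ww : ℕ → ℝ
  | 0 => 1
  | n + 1 => ww n * (2 * n + 2) / (2 * n + 3)

theorem ww_pos (n : ℕ) : 0 < ww n := by
  induction n with
  | zero => simp [ww]
  | succ n ih => rw [ww]; positivity

def PP (N : ℕ) (x : ℝ) : ℝ := ∑ n ∈ Finset.range N, (-1) ^ n * ww n * x ^ (2 * n + 1)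
def PP' (N : ℕ) (x : ℝ) : ℝ := ∑ n ∈ Finset.range N, (-1) ^ n * ww n * ((2 * n + 1) * x ^ (2 * n))
def QQ (N : ℕ) (x : ℝ) : ℝ := ∑ n ∈ Finset.range N, (-1) ^ n * (ww n / (n + 1)) * x ^ (2 * n + 2)

theorem PP_deriv (N : ℕ) (x : ℝ) : HasDerivAt (PP N) (PP' N x) x := by
  unfold PP PP'
  apply HasDerivAt.fun_sum
  intro n _
  apply HasDerivAt.const_mul
  simpa using hasDerivAt_pow (2 * n + 1) x

theorem QQ_deriv (N : ℕ) (x : ℝ) : HasDerivAt (QQ N) (2 * PP N x) x := by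
  unfold PP QQ
  rw [Finset.mul_sum]
  apply HasDerivAt.fun_sum
  intro n _
  have := (hasDerivAt_pow (2 * n + 2) x).const_mul ((-1) ^ n * (ww n / (n + 1)))
  refine this.congr_deriv ?_
  have : (n : ℝ) + 1 ≠ 0 := by positivity
  push_cast
  field_simp

theorem PP_id (N : ℕ) (x : ℝ) :
    (1 + x ^ 2) * PP' N x + x * PP N x = 1 - (-1) ^ N * ((2 * N + 1) * ww N) * x ^ (2 * N) := by
  induction N with
  | zero => simp [PP, PP', ww]
  | succ N ih =>
    have h1 : PP' (N + 1) x = PP' N x + (-1) ^ N * ww N * ((2 * N + 1) * x ^ (2 * N)) := by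
      simp [PP', Finset.sum_range_succ]
    have h2 : PP (N + 1) x = PP N x + (-1) ^ N * ww N * x ^ (2 * N + 1) := by
      simp [PP, Finset.sum_range_succ]
    have h3 : (2 * ((N + 1 : ℕ) : ℝ) + 1) * ww (N + 1) = (2 * N + 2) * ww N := by
      rw [ww]; push_cast
      have : (2 * (N : ℝ) + 3) ≠ 0 := by positivity
      field_simp
      ring
    rw [h1, h2, h3]
    linear_combination ih

theorem mono_aux {g g' : ℝ → ℝ} (h : ∀ x, HasDerivAt g (g' x) x) (h0 : g 0 = 0)
    (hp : ∀ x, 0 ≤ x → 0 ≤ g' x) (x : ℝ) (hx : 0 ≤ x) : 0 ≤ g x := by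
  have : MonotoneOn g (Set.Ici 0) := by
    apply monotoneOn_of_deriv_nonneg (convex_Ici 0)
    · exact fun y _ => (h y).continuousAt.continuousWithinAt
    · exact fun y _ => (h y).differentiableAt.differentiableWithinAt
    · intro y hy
      rw [(h y).deriv]
      apply hp
      simp at hy
      exact hy.le
  rw [← h0]
  exact this (by simp) hx hx

theorem claim1 (N : ℕ) (x : ℝ) (hx : 0 ≤ x) :
    0 ≤ (-1) ^ N * (Real.arsinh x - √(1 + x ^ 2) * PP N x) := by
  refine mono_aux (g := fun x => (-1) ^ N * (Real.arsinh x - √(1 + x ^ 2) * PP N x))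
    (g' := fun x => (2 * N + 1) * ww N * x ^ (2 * N) / √(1 + x ^ 2)) ?_ ?_ ?_ x hx
  · intro x
    have hpos : 0 < 1 + x ^ 2 := by positivity
    have hs : HasDerivAt (fun x : ℝ => √(1 + x ^ 2)) (x / √(1 + x ^ 2)) x := by
      have := (((hasDerivAt_pow 2 x).const_add 1).sqrt hpos.ne')
      refine this.congr_deriv ?_
      field_simp
      simp [mul_comm]
    have := ((Real.hasDerivAt_arsinh x).sub (hs.mul (PP_deriv N x))).const_mul ((-1) ^ N)
    refine this.congr_deriv ?_
    have hq : 0 < √(1 + x ^ 2) := Real.sqrt_pos.2 hpos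
    have hq2 : √(1 + x ^ 2) ^ 2 = 1 + x ^ 2 := Real.sq_sqrt hpos.le
    have e : ((-1 : ℝ) ^ N) * (-1) ^ N = 1 := by rw [← mul_pow]; simp
    field_simp
    rw [hq2]
    have := PP_id N x
    linear_combination -(-1) ^ N * this + ((2 * N + 1) * ww N) * x ^ (2 * N) * e
  · simp [PP]
  · intro x hx
    have := ww_pos N
    positivity

theorem claim2 (N : ℕ) (x : ℝ) (hx : 0 ≤ x) :
    0 ≤ (-1) ^ N * (Real.arsinh x ^ 2 - QQ N x) := by
  refine mono_aux (g := fun x => (-1) ^ N * (Real.arsinh x ^ 2 - QQ N x))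
    (g' := fun x => 2 * ((-1) ^ N * (Real.arsinh x - √(1 + x ^ 2) * PP N x)) / √(1 + x ^ 2)) ?_ ?_ ?_ x hx
  · intro x
    have hpos : 0 < 1 + x ^ 2 := by positivity
    have := (((Real.hasDerivAt_arsinh x).pow 2).sub (QQ_deriv N x)).const_mul ((-1) ^ N)
    refine this.congr_deriv ?_
    have hq : 0 < √(1 + x ^ 2) := Real.sqrt_pos.2 hpos
    field_simp
    simp
    ring
  · simp [QQ]
  · intro x hx
    have := claim1 N x hx
    positivity

open Real in
theorem sin_int (n : ℕ) :
    ww n * ∫ x in (0:ℝ)..(π / 2), sin x ^ (2 * n + 2) = π / 4 / (n + 1) := by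
  induction n with
  | zero =>
    simp [ww, integral_sin_sq]
    ring
  | succ n ih =>
    have := integral_sin_pow (a := 0) (b := π / 2) (2 * n + 2)
    rw [show 2 * (n + 1) + 2 = 2 * n + 2 + 2 by ring, this, ww]
    simp
    have h1 : (n : ℝ) + 1 ≠ 0 := by positivity
    have h2 : (2 * n : ℝ) + 3 ≠ 0 := by positivity
    have h3 : (n : ℝ) + 1 + 1 ≠ 0 := by positivity
    have h4 : (2 * n : ℝ) + 2 + 2 ≠ 0 := by positivity
    field_simp at ih ⊢
    linear_combination (2 * n + 3) * ih

open Real in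
theorem QQ_int (N : ℕ) : ∫ x in (0:ℝ)..(π / 2), QQ N (sin x) =
    π / 4 * ∑ n ∈ Finset.range N, (-1 : ℝ) ^ n / ((n : ℝ) + 1) ^ 2 := by
  unfold QQ
  rw [intervalIntegral.integral_finsetSum, Finset.mul_sum]
  · apply Finset.sum_congr rfl
    intro n _
    rw [intervalIntegral.integral_const_mul]
    have := sin_int n
    have h1 : (n : ℝ) + 1 ≠ 0 := by positivity
    rw [div_eq_mul_inv (ww n)]
    rw [show (-1 : ℝ) ^ n * (ww n * ((n : ℝ) + 1)⁻¹) * (∫ x in (0:ℝ)..(π / 2), sin x ^ (2 * n + 2)) = (-1 : ℝ) ^ n * ((n : ℝ) + 1)⁻¹ * (ww n * (∫ x in (0:ℝ)..(π / 2), sin x ^ (2 * n + 2))) by ring, this]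
    field_simp
  · intro n _
    apply Continuous.intervalIntegrable
    fun_prop

open Real in
theorem main_int : ∫ x in (0:ℝ)..(π / 2), arsinh (sin x) ^ 2 = π ^ 3 / 48 := by
  have ht := (aux_hasSum.tendsto_sum_nat).const_mul (π / 4)
  rw [show π / 4 * (π ^ 2 / 12) = π ^ 3 / 48 by ring] at ht
  have hA : Continuous (fun x => arsinh (sin x) ^ 2) := by
    exact (continuous_arsinh.comp continuous_sin).pow 2
  have hQ : ∀ N, Continuous (fun x => QQ N (sin x)) := by
    intro N; unfold QQ; fun_prop
  have hpi : (0:ℝ) ≤ π / 2 := by positivity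
  have hs : ∀ x ∈ Set.Icc (0:ℝ) (π / 2), 0 ≤ sin x := fun x hx =>
    sin_nonneg_of_nonneg_of_le_pi hx.1 (by linarith [hx.2, pi_pos])
  apply le_antisymm
  · have h2 : Filter.Tendsto (fun k : ℕ => 2 * k + 1) Filter.atTop Filter.atTop :=
      Filter.tendsto_atTop_mono (fun k => by show k ≤ _; omega) Filter.tendsto_id
    refine ge_of_tendsto' (ht.comp h2) fun k => ?_
    simp only [Function.comp]
    rw [← QQ_int]
    apply intervalIntegral.integral_mono_on hpi (hA.intervalIntegrable _ _) ((hQ _).intervalIntegrable _ _)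
    intro x hx
    have := claim2 (2 * k + 1) (sin x) (hs x hx)
    simp [pow_add, pow_mul] at this
    simpa using this
  · have h2 : Filter.Tendsto (fun k : ℕ => 2 * k) Filter.atTop Filter.atTop :=
      Filter.tendsto_atTop_mono (fun k => by show k ≤ _; omega) Filter.tendsto_id
    refine le_of_tendsto' (ht.comp h2) fun k => ?_
    simp only [Function.comp]
    rw [← QQ_int]
    apply intervalIntegral.integral_mono_on hpi ((hQ _).intervalIntegrable _ _) (hA.intervalIntegrable _ _)
    intro x hx
    have := claim2 (2 * k) (sin x) (hs x hx)
    simp [pow_mul] at this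
    simpa using this

def qa (t : ℝ) : ℝ := t ^ 2 - √2 * t + 1
def qb (t : ℝ) : ℝ := t ^ 2 + √2 * t + 1

theorem s2 : √2 ^ 2 = (2 : ℝ) := Real.sq_sqrt (by norm_num)

theorem qa_pos (t : ℝ) : 0 < qa t := by
  unfold qa; nlinarith [sq_nonneg (t - √2 / 2), s2]
theorem qb_pos (t : ℝ) : 0 < qb t := by
  unfold qb; nlinarith [sq_nonneg (t + √2 / 2), s2]
theorem qab (t : ℝ) : qa t * qb t = 1 + t ^ 4 := by
  unfold qa qb; linear_combination (-t ^ 2) * s2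

def LL (t : ℝ) : ℝ := Real.log (qa t) - Real.log (qb t)
def LL' (t : ℝ) : ℝ := (2 * t - √2) / qa t - (2 * t + √2) / qb t

theorem LL_deriv (t : ℝ) : HasDerivAt LL (LL' t) t := by
  have h1 : HasDerivAt qa (2 * t - √2) t := by
    have := ((hasDerivAt_pow 2 t).sub ((hasDerivAt_id t).const_mul √2)).add_const 1
    refine this.congr_deriv ?_
    simp
  have h2 : HasDerivAt qb (2 * t + √2) t := by
    have := ((hasDerivAt_pow 2 t).add ((hasDerivAt_id t).const_mul √2)).add_const 1
    refine this.congr_deriv ?_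
    simp
  exact (h1.log (qa_pos t).ne').sub (h2.log (qb_pos t).ne')

theorem LL'_cont : Continuous LL' := by
  unfold LL'
  have h1 : Continuous qa := by unfold qa; fun_prop
  have h2 : Continuous qb := by unfold qb; fun_prop
  exact ((by fun_prop : Continuous fun t : ℝ => 2 * t - √2).div h1 (fun t => (qa_pos t).ne')).sub
    ((by fun_prop : Continuous fun t : ℝ => 2 * t + √2).div h2 (fun t => (qb_pos t).ne'))

theorem LL_cont : Continuous LL := 
  continuous_iff_continuousAt.2 fun t => (LL_deriv t).continuousAt

def th (t : ℝ) : ℝ := Real.arctan (√2 * t + 1) + Real.arctan (√2 * t - 1)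
def th' (t : ℝ) : ℝ := √2 * (1 + t ^ 2) / (1 + t ^ 4)

theorem th_deriv (t : ℝ) : HasDerivAt th (th' t) t := by
  have h1 := (((hasDerivAt_id t).const_mul √2).add_const 1).arctan
  have h2 := (((hasDerivAt_id t).const_mul √2).sub_const 1).arctan
  refine (h1.add h2).congr_deriv ?_
  simp only [id, mul_one]
  have e1 : 1 + (√2 * t + 1) ^ 2 = 2 * qb t := by unfold qb; linear_combination t ^ 2 * s2
  have e2 : 1 + (√2 * t - 1) ^ 2 = 2 * qa t := by unfold qa; linear_combination t ^ 2 * s2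
  rw [e1, e2, th', ← qab]
  have := qa_pos t
  have := qb_pos t
  field_simp
  unfold qa qb; ring

theorem th'_cont : Continuous th' := by
  unfold th'
  exact (by fun_prop : Continuous fun t : ℝ => √2 * (1 + t ^ 2)).div (by fun_prop) (fun t => by positivity)

theorem sin_th (t : ℝ) : Real.sin (th t) = √2 * t / √(1 + t ^ 4) := by
  have e1 : 1 + (√2 * t + 1) ^ 2 = 2 * qb t := by unfold qb; linear_combination t ^ 2 * s2
  have e2 : 1 + (√2 * t - 1) ^ 2 = 2 * qa t := by unfold qa; linear_combination t ^ 2 * s2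
  rw [th, Real.sin_add, Real.sin_arctan, Real.sin_arctan, Real.cos_arctan, Real.cos_arctan, e1, e2, ← qab]
  have ha := qa_pos t
  have hb := qb_pos t
  rw [Real.sqrt_mul (by norm_num), Real.sqrt_mul (by norm_num), Real.sqrt_mul ha.le]
  have := Real.sqrt_pos.2 ha
  have := Real.sqrt_pos.2 hb
  field_simp
  linear_combination -√2 * t * s2

theorem arsinh_th (t : ℝ) : Real.arsinh (Real.sin (th t)) = - LL t / 2 := by
  have ha := qa_pos t
  have hb := qb_pos t
  have h4 : (0:ℝ) < 1 + t ^ 4 := by positivity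
  have hq := Real.sqrt_pos.2 h4
  have hs : √(1 + (√2 * t / √(1 + t ^ 4)) ^ 2) = (1 + t ^ 2) / √(1 + t ^ 4) := by
    rw [Real.sqrt_eq_iff_mul_self_eq (by positivity) (by positivity)]
    have := Real.sq_sqrt h4.le
    field_simp
    rw [this, s2]
    ring
  rw [sin_th, Real.arsinh, hs, ← add_div, show √2 * t + (1 + t ^ 2) = qb t by unfold qb; ring,
    Real.log_div hb.ne' hq.ne', Real.log_sqrt h4.le, ← qab, Real.log_mul ha.ne' hb.ne', LL]
  ring

theorem th_one : th 1 = Real.pi / 2 := by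
  have h : √2 - 1 = (√2 + 1 : ℝ)⁻¹ := by
    have : (√2 + 1 : ℝ) ≠ 0 := by positivity
    field_simp
    linear_combination s2
  rw [th, mul_one, h, Real.arctan_inv_of_pos (by positivity)]
  ring

theorem th_zero : th 0 = 0 := by
  simp [th, Real.arctan_neg]

theorem real_int : ∫ t in (0:ℝ)..1, LL t ^ 2 * th' t = Real.pi ^ 3 / 12 := by
  have := intervalIntegral.integral_comp_mul_deriv (a := 0) (b := 1) (f := th) (f' := th')
    (g := fun x => Real.arsinh (Real.sin x) ^ 2) (fun x _ => th_deriv x) th'_cont.continuousOn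
    ((Real.continuous_arsinh.comp Real.continuous_sin).pow 2)
  rw [th_one, th_zero, main_int] at this
  simp only [Function.comp, arsinh_th] at this
  have h2 : (fun t => LL t ^ 2 * th' t) = fun t => 4 * ((-LL t / 2) ^ 2 * th' t) := by
    funext t; ring
  rw [h2, intervalIntegral.integral_const_mul, this]
  ring

theorem p1_eq : p₁ = (√2 / 2 : ℝ) + (√2 / 2 : ℝ) * Complex.I := by
  rw [p₁, mul_comm, show ((Real.pi : ℂ) / 4) = ((Real.pi / 4 : ℝ) : ℂ) by push_cast; rfl,
    Complex.exp_mul_I, ← Complex.ofReal_cos, ← Complex.ofReal_sin, Real.cos_pi_div_four,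
    Real.sin_pi_div_four]

theorem p2_eq : p₂ = -(√2 / 2 : ℝ) + (√2 / 2 : ℝ) * Complex.I := by
  rw [p₂, ← mul_neg, mul_comm, show (-((Real.pi : ℂ) / 4)) = ((-(Real.pi / 4) : ℝ) : ℂ) by push_cast; rfl,
    Complex.exp_mul_I, ← Complex.ofReal_cos, ← Complex.ofReal_sin, Real.cos_neg, Real.sin_neg, Real.cos_pi_div_four,
    Real.sin_pi_div_four]
  push_cast
  ring

theorem s2c : ((√2 : ℝ) : ℂ) ^ 2 = 2 := by
  rw [← Complex.ofReal_pow, s2]; simp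

theorem prod14 (t : ℝ) : ((t : ℂ) - p₁) * (t - p₄) = (qa t : ℂ) := by
  rw [p₄, p1_eq, p2_eq, qa]; push_cast
  linear_combination (1 / 2 : ℂ) * s2c - ((√2 : ℝ) : ℂ) ^ 2 / 4 * (Complex.I_sq)

theorem prod23 (t : ℝ) : ((t : ℂ) - p₂) * (t - p₃) = (qb t : ℂ) := by
  rw [p₃, p1_eq, p2_eq, qb]; push_cast
  linear_combination (1 / 2 : ℂ) * s2c - ((√2 : ℝ) : ℂ) ^ 2 / 4 * (Complex.I_sq)

theorem qac (t : ℝ) : (qa t : ℂ) ≠ 0 := by exact_mod_cast (qa_pos t).ne'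
theorem qbc (t : ℝ) : (qb t : ℂ) ≠ 0 := by exact_mod_cast (qb_pos t).ne'

theorem inv_aux {a b c : ℂ} (h : a * b = c) (hc : c ≠ 0) : 1 / a = b / c ∧ 1 / b = a / c := by
  subst h
  have h1 := left_ne_zero_of_mul hc
  have h2 := right_ne_zero_of_mul hc
  constructor <;> field_simp

theorem F2_eq (t : ℝ) : F₂ t = (LL' t : ℂ) := by
  obtain ⟨h1, h4⟩ := inv_aux (prod14 t) (qac t)
  obtain ⟨h2, h3⟩ := inv_aux (prod23 t) (qbc t)
  rw [F₂, h1, h2, h3, h4, LL']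
  have := qac t
  have := qbc t
  push_cast
  field_simp
  rw [p₃, p₄, p1_eq, p2_eq]; push_cast; ring

theorem F3_eq (t : ℝ) : F₃ t = 2 * Complex.I * (th' t : ℂ) := by
  obtain ⟨h1, h4⟩ := inv_aux (prod14 t) (qac t)
  obtain ⟨h2, h3⟩ := inv_aux (prod23 t) (qbc t)
  rw [F₃, h1, h2, h3, h4, th', ← qab]
  have := qac t
  have := qbc t
  push_cast
  field_simp
  rw [p₃, p₄, p1_eq, p2_eq, qa, qb]; push_cast; ring

/- STATEMENT 11: `Ω_{2,2,3} = iπ³/12`. -/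
theorem stmt_11 :
    Omega [F₂, F₂, F₃] 1 = Complex.I * (Real.pi : ℂ) ^ 3 / 12 := by
  have L0 : LL 0 = 0 := by simp [LL, qa, qb]
  have e1 : (fun z : ℝ => ∫ t in (0:ℝ)..z, (1 : ℂ) * F₂ t) = fun z => (LL z : ℂ) := by
    funext z
    simp only [F2_eq, one_mul]
    rw [intervalIntegral.integral_ofReal,
      intervalIntegral.integral_eq_sub_of_hasDerivAt (fun x _ => LL_deriv x)
        (LL'_cont.intervalIntegrable _ _), L0, sub_zero]
  have e2 : (fun z : ℝ => ∫ t in (0:ℝ)..z, (LL t : ℂ) * F₂ t) = fun z => ((LL z ^ 2 / 2 : ℝ) : ℂ) := by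
    funext z
    simp only [F2_eq, ← Complex.ofReal_mul]
    rw [intervalIntegral.integral_ofReal,
      intervalIntegral.integral_eq_sub_of_hasDerivAt (f := fun z => LL z ^ 2 / 2) (f' := fun z => LL z * LL' z) (fun x _ => ?_)
        ((LL_cont.mul LL'_cont).intervalIntegrable _ _), L0]
    · simp
    · refine (((LL_deriv x).pow 2).div_const 2).congr_deriv ?_
      simp
      ring
  simp only [Omega, List.foldl]
  simp only [funext_iff] at e1 e2
  simp only [e1, e2]
  have e3 : (fun t : ℝ => ((LL t ^ 2 / 2 : ℝ) : ℂ) * F₃ t) =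
      fun t => Complex.I * ((LL t ^ 2 * th' t : ℝ) : ℂ) := by
    funext t
    rw [F3_eq]; push_cast; ring
  rw [e3, intervalIntegral.integral_const_mul, intervalIntegral.integral_ofReal, real_int]
  push_cast
  ring
end
end

section
/- With the notation of the iterated integrals Ω at φ = π/4, one has Ω_{3,1,1} = (iπ/2)·(log 2)² − iπ³/12. -/
noncomputable section

theorem aux_hs {f g : ℕ → ℝ} {a b : ℝ} (h : HasSum f a) (hf : ∀ n, g n = f n) (hab : b = a) :
    HasSum g b := by
  rw [hab, show g = f from funext hf]; exact h

theorem aux_hd {f g : ℝ → ℝ} {a b x : ℝ} (h : HasDerivAt f a x) (hf : ∀ n, g n = f n) (hab : b = a) :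
    HasDerivAt g b x := by
  rw [hab, show g = f from funext hf]; exact h

open Real in
theorem aux_swap {a b : ℝ} (hab : a ≤ b) {F : ℕ → ℝ → ℝ} {f : ℝ → ℝ} {u : ℕ → ℝ}
    (hF : ∀ n, Continuous (F n)) (hu : Summable u)
    (hb : ∀ n, ∀ t ∈ Set.Icc a b, |F n t| ≤ u n)
    (hs : ∀ t ∈ Set.Icc a b, HasSum (fun n => F n t) (f t)) :
    HasSum (fun n => ∫ t in a..b, F n t) (∫ t in a..b, f t) := by
  have hsub : Set.uIoc a b ⊆ Set.Icc a b := by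
    rw [Set.uIoc_of_le hab]; exact Set.Ioc_subset_Icc_self
  refine intervalIntegral.hasSum_integral_of_dominated_convergence (fun n _ => u n) ?_ ?_ ?_ ?_ ?_
  · intro n; exact (hF n).aestronglyMeasurable
  · intro n; exact Filter.Eventually.of_forall fun t ht => hb n t (hsub ht)
  · exact Filter.Eventually.of_forall fun t ht => hu
  · exact intervalIntegrable_const
  · exact Filter.Eventually.of_forall fun t ht => hs t (hsub ht)

def auxW (n : ℕ) : ℝ := ∫ x in (0:ℝ)..(Real.pi/2), Real.cos x ^ n

theorem auxW_rec (n : ℕ) : auxW (n+2) = ((n:ℝ)+1)/(n+2) * auxW n := by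
  unfold auxW
  rw [integral_cos_pow]
  simp

theorem auxW_prod (n : ℕ) : ((n:ℝ)+1) * (auxW n * auxW (n+1)) = Real.pi/2 := by
  induction n with
  | zero => simp [auxW]
  | succ n ih =>
    rw [auxW_rec n, ← ih]
    push_cast
    field_simp
    ring

theorem auxW_le (n : ℕ) : |auxW n| ≤ Real.pi/2 := by
  have h := intervalIntegral.norm_integral_le_of_norm_le_const (a := 0) (b := Real.pi/2) (C := 1)
    (f := fun x => Real.cos x ^ n) (by
      intro x _
      rw [norm_pow]
      exact pow_le_one₀ (norm_nonneg _) (by simpa using Real.abs_cos_le_one x))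
  have hp := Real.pi_pos
  rw [sub_zero, abs_of_pos (by positivity : 0 < Real.pi/2), one_mul] at h
  exact h

theorem aux_geom {y : ℝ} (h0 : 0 ≤ y) (h1 : y < 1) :
    HasSum (fun n : ℕ => y^(2*n+1)) (y/(1-y^2)) := by
  have h := (hasSum_geometric_of_lt_one (sq_nonneg y) (by nlinarith : y^2 < 1)).mul_left y
  refine aux_hs h (fun n => ?_) (div_eq_mul_inv _ _)
  rw [← pow_mul]; ring

theorem aux_step1 {y : ℝ} (h0 : 0 ≤ y) (h1 : y < 1) :
    HasSum (fun n : ℕ => auxW (2*n+1) * y^(2*n+1)) (Real.arcsin y / √(1-y^2)) := by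
  have hp := Real.pi_pos
  have hpos : 0 < 1 - y^2 := by nlinarith
  have hc : ∀ φ, 0 < 1 - (y * Real.cos φ)^2 := by
    intro φ
    have := Real.cos_sq_le_one φ
    have : (y * Real.cos φ)^2 ≤ y^2 := by rw [mul_pow]; nlinarith [sq_nonneg y]
    linarith
  have key := aux_swap (a := 0) (b := Real.pi/2) (by positivity)
    (F := fun n φ => (y * Real.cos φ)^(2*n+1))
    (f := fun φ => (y * Real.cos φ)/(1-(y * Real.cos φ)^2)) (u := fun n => y^(2*n+1))
    (by intro n; fun_prop) (aux_geom h0 h1).summable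
    (by
      intro n t _
      rw [abs_pow, abs_mul, abs_of_nonneg h0]
      exact pow_le_pow_left₀ (by positivity)
        (mul_le_of_le_one_right h0 (Real.abs_cos_le_one t)) _)
    (by
      intro t ht
      have hct : 0 ≤ Real.cos t := Real.cos_nonneg_of_mem_Icc ⟨by linarith [ht.1], ht.2⟩
      exact aux_geom (mul_nonneg h0 hct)
        (lt_of_le_of_lt (mul_le_of_le_one_right h0 (Real.cos_le_one t)) h1))
  refine aux_hs key ?_ ?_
  · intro n
    simp only [mul_pow, auxW]
    rw [intervalIntegral.integral_const_mul]; ring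
  · set s := √(1-y^2) with hs
    have hs0 : 0 < s := Real.sqrt_pos.mpr hpos
    have hs2 : s^2 = 1 - y^2 := Real.sq_sqrt hpos.le
    rw [intervalIntegral.integral_eq_sub_of_hasDerivAt
      (f := fun φ => Real.arctan (y * Real.sin φ / s) / s)]
    · rw [Real.arcsin_eq_arctan ⟨by linarith, h1⟩]
      simp [hs]
    · intro φ _
      have h := ((((Real.hasDerivAt_sin φ).const_mul y).div_const s).arctan).div_const s
      refine aux_hd h (fun _ => ?_) ?_
      · rfl
      have e : 1 - (y * Real.cos φ)^2 = s^2 + (y * Real.sin φ)^2 := by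
        rw [hs2]; nlinarith [Real.sin_sq_add_cos_sq φ]
      have e2 : 0 < s^2 + (y * Real.sin φ)^2 := by positivity
      rw [e]
      field_simp
    · apply Continuous.intervalIntegrable
      exact Continuous.div (by fun_prop) (by fun_prop) (fun φ => (hc φ).ne')

theorem aux_step2 {x : ℝ} (h0 : 0 ≤ x) (h1 : x < 1) :
    HasSum (fun n : ℕ => auxW (2*n+1) * (x^(2*n+2) / (2*n+2))) (Real.arcsin x ^ 2 / 2) := by
  have hp := Real.pi_pos
  have key := aux_swap (a := 0) (b := x) h0
    (F := fun n y => auxW (2*n+1) * y^(2*n+1))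
    (f := fun y => Real.arcsin y / √(1-y^2)) (u := fun n => Real.pi/2 * x^(2*n+1))
    (by intro n; fun_prop) ((aux_geom h0 h1).summable.mul_left _)
    (by
      intro n t ht
      rw [abs_mul, abs_pow, abs_of_nonneg ht.1]
      exact mul_le_mul (auxW_le _) (pow_le_pow_left₀ ht.1 ht.2 _) (by have := ht.1; positivity) (by positivity))
    (by
      intro t ht
      exact aux_step1 ht.1 (lt_of_le_of_lt ht.2 h1))
  refine aux_hs key ?_ ?_
  · intro n
    rw [intervalIntegral.integral_const_mul, integral_pow]
    push_cast
    congr 1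
    ring_nf
  · rw [intervalIntegral.integral_eq_sub_of_hasDerivAt
      (f := fun y => Real.arcsin y ^ 2 / 2)]
    · simp
    · intro y hy
      rw [Set.uIcc_of_le h0] at hy
      have h := ((Real.hasDerivAt_arcsin (x := y) (by linarith [hy.1]) (by linarith [hy.2])).pow 2).div_const 2
      refine aux_hd h (fun _ => ?_) ?_
      · rfl
      simp; ring
    · apply ContinuousOn.intervalIntegrable
      rw [Set.uIcc_of_le h0]
      apply ContinuousOn.div
      · exact Real.continuous_arcsin.continuousOn
      · fun_prop
      · intro y hy
        apply (Real.sqrt_pos.mpr _).ne'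
        nlinarith [hy.1, hy.2]

theorem aux_step3 :
    HasSum (fun n : ℕ => Real.pi/4 * ((1/2:ℝ)^(n+1)/((n:ℝ)+1)^2))
      (∫ θ in (0:ℝ)..(Real.pi/2), Real.arcsin (Real.cos θ / √2) ^ 2) := by
  have hp := Real.pi_pos
  have h2 : (0:ℝ) < √2 := by positivity
  have h22 : √2 ^ 2 = 2 := Real.sq_sqrt (by norm_num)
  have h1 : 1 < √2 := by nlinarith
  have key := (aux_swap (a := 0) (b := Real.pi/2) (by positivity)
    (F := fun n θ => auxW (2*n+1) * ((Real.cos θ/√2)^(2*n+2) / (2*n+2)))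
    (f := fun θ => Real.arcsin (Real.cos θ / √2) ^ 2 / 2) (u := fun n => Real.pi/2 * (1/2)^n)
    (by intro n; fun_prop) ((summable_geometric_of_lt_one (by norm_num) (by norm_num)).mul_left _)
    (by
      intro n t ht
      rw [abs_mul]
      refine mul_le_mul (auxW_le _) ?_ (by positivity) (by positivity)
      rw [abs_div, abs_pow, abs_of_nonneg (by positivity : (0:ℝ) ≤ 2*n+2)]
      have e : |Real.cos t/√2|^(2*n+2) = (Real.cos t^2)^(n+1) * (1/2)^(n+1) := by
        rw [show 2*n+2 = 2*(n+1) by ring, pow_mul, sq_abs, div_pow, h22, ← mul_pow]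
        congr 1; ring
      rw [e]
      have e1 : (Real.cos t^2)^(n+1) ≤ 1 := pow_le_one₀ (sq_nonneg _) (Real.cos_sq_le_one t)
      have e2 : (1/2:ℝ)^(n+1) ≤ (1/2)^n := pow_le_pow_of_le_one (by norm_num) (by norm_num) (by omega)
      have e3 : (0:ℝ) ≤ (1/2)^(n+1) := by positivity
      rw [div_le_iff₀ (by positivity)]
      have e4 : (0:ℝ) ≤ (1/2)^n * n := by positivity
      nlinarith)
    (by
      intro t ht
      have hct : 0 ≤ Real.cos t := Real.cos_nonneg_of_mem_Icc ⟨by linarith [ht.1], ht.2⟩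
      exact aux_step2 (by positivity)
        (by rw [div_lt_one h2]; exact lt_of_le_of_lt (Real.cos_le_one t) h1))).mul_left 2
  refine aux_hs key ?_ ?_
  · intro n
    simp only [div_pow]
    rw [intervalIntegral.integral_const_mul, intervalIntegral.integral_div, intervalIntegral.integral_div]
    have := auxW_prod (2*n+1)
    have e : √2^(2*n+2) = 2^(n+1) := by rw [show 2*n+2 = 2*(n+1) by ring, pow_mul, h22]
    change _ = 2 * (auxW (2*n+1) * (auxW (2*n+2) / _ / _))
    rw [e]
    push_cast at this
    have hx : Real.pi = 2 * ((2 * (n:ℝ) + 1 + 1) * (auxW (2 * n + 1) * auxW (2 * n + 1 + 1))) := by linarith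
    rw [hx, one_pow, show 2*n+1+1 = 2*n+2 by ring]
    field_simp
    ring
  · rw [intervalIntegral.integral_div]; ring

def auxLi (x : ℝ) : ℝ := ∑' n : ℕ, x^(n+1)/((n:ℝ)+1)^2

theorem aux_summ : Summable (fun n : ℕ => 1/((n:ℝ)+1)^2) := by
  have := (summable_nat_add_iff 1).mpr hasSum_zeta_two.summable
  simpa using this

theorem auxLi_one : auxLi 1 = Real.pi^2/6 := by
  unfold auxLi
  have h := (hasSum_nat_add_iff' (f := fun n : ℕ => 1/(n:ℝ)^2) 1).mpr hasSum_zeta_two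
  simp at h
  simpa using h.tsum_eq

theorem auxLi_cont : ContinuousOn auxLi (Set.Icc 0 1) := by
  apply continuousOn_tsum (u := fun n : ℕ => 1/((n:ℝ)+1)^2)
  · intro n; fun_prop
  · exact aux_summ
  · intro n x hx
    rw [norm_div, norm_pow, norm_pow, Real.norm_of_nonneg hx.1, Real.norm_of_nonneg (by positivity : (0:ℝ) ≤ n+1)]
    gcongr
    exact pow_le_one₀ hx.1 hx.2

theorem auxLi_deriv {x : ℝ} (h0 : 0 < x) (h1 : x < 1) :
    HasDerivAt auxLi (-Real.log (1-x)/x) x := by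
  obtain ⟨r, hr1, hr2⟩ := exists_between h1
  have hr0 : 0 < r := h0.trans hr1
  have := hasDerivAt_tsum_of_isPreconnected (𝕜 := ℝ) (u := fun n : ℕ => r^n)
    (g := fun (n:ℕ) (x:ℝ) => x^(n+1)/((n:ℝ)+1)^2) (g' := fun n x => x^n/((n:ℝ)+1))
    (t := Set.Ioo 0 r) (y₀ := x) (y := x)
    (summable_geometric_of_lt_one hr0.le hr2) isOpen_Ioo isPreconnected_Ioo
    (by
      intro n y _
      have h := (hasDerivAt_pow (n+1) y).div_const (((n:ℝ)+1)^2)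
      refine aux_hd h (fun _ => ?_) ?_
      · rfl
      push_cast
      field_simp)
    (by
      intro n y hy
      have hy1 := hy.1
      rw [Real.norm_of_nonneg (by positivity)]
      calc y^n/((n:ℝ)+1) ≤ y^n := div_le_self (by positivity) (by linarith [Nat.cast_nonneg (α := ℝ) n])
        _ ≤ r^n := pow_le_pow_left₀ hy1.le hy.2.le n)
    ⟨h0, hr1⟩
    (by
      refine Summable.of_nonneg_of_le (fun n => by positivity) (fun n => ?_) aux_summ
      gcongr
      exact pow_le_one₀ h0.le h1.le)
    ⟨h0, hr1⟩
  refine aux_hd this (fun _ => ?_) ?_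
  · rfl
  have h := (Real.hasSum_pow_div_log_of_abs_lt_one (x := x) (by rw [abs_of_pos h0]; exact h1)).div_const x
  rw [← h.tsum_eq]
  congr 1; funext n
  field_simp
  ring

theorem auxlog_cont : ContinuousOn (fun x => Real.log x * Real.log (1-x)) (Set.Icc 0 (1/2)) := by
  intro x hx
  rcases eq_or_lt_of_le hx.1 with h | h
  · subst h
    unfold ContinuousWithinAt
    simp only [Real.log_zero, zero_mul]
    have hb : Filter.Tendsto (fun x : ℝ => 2 * |x * Real.log x|) (nhdsWithin 0 (Set.Icc 0 (1/2))) (nhds 0) := by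
      have : Continuous (fun x : ℝ => 2 * |x * Real.log x|) := by
        have := Real.continuous_mul_log
        fun_prop
      have := (this.tendsto 0).mono_left (nhdsWithin_le_nhds (s := Set.Icc (0:ℝ) (1/2)))
      simpa using this
    apply squeeze_zero_norm' _ hb
    filter_upwards [self_mem_nhdsWithin] with y hy
    have hb := Real.one_sub_inv_le_log_of_pos (x := 1-y) (by linarith [hy.2])
    have hb2 := Real.log_nonpos (x := 1-y) (by linarith [hy.2]) (by linarith [hy.1])
    have : |Real.log (1-y)| ≤ 2*y := by
      rw [abs_of_nonpos hb2]
      have : (1-y)⁻¹ ≤ 1 + 2*y := by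
        rw [inv_le_iff_one_le_mul₀ (by linarith [hy.2])]
        nlinarith [hy.1, hy.2]
      linarith
    rw [Real.norm_eq_abs, abs_mul, abs_mul, abs_of_nonneg hy.1]
    nlinarith [abs_nonneg (Real.log y)]
  · apply ContinuousAt.continuousWithinAt
    have := hx.2
    have h3 : 1 - x ≠ 0 := by linarith
    have h4 := h.ne'
    fun_prop (disch := assumption)

theorem auxLi_half : auxLi (1/2) = Real.pi^2/12 - Real.log 2^2/2 := by
  obtain ⟨c, hc, h⟩ := exists_hasDerivAt_eq_slope
    (fun x => auxLi x + auxLi (1-x) + Real.log x * Real.log (1-x)) (fun _ => 0)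
    (a := 0) (b := 1/2) (by norm_num)
    (by
      refine ContinuousOn.add (ContinuousOn.add (auxLi_cont.mono ?_) (auxLi_cont.comp (by fun_prop) ?_)) auxlog_cont
      · intro x hx; exact ⟨hx.1, by linarith [hx.2]⟩
      · intro x hx; exact ⟨by linarith [hx.2], by linarith [hx.1]⟩)
    (by
      intro x hx
      have hx0 := hx.1
      have hx1 : x < 1 := by linarith [hx.2]
      have hx2 : 1 - x ≠ 0 := by linarith
      have d1 := auxLi_deriv hx0 hx1
      have d0 : HasDerivAt (fun y : ℝ => 1 - y) (-1) x := by
        simpa using (hasDerivAt_id x).const_sub 1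
      have d2 := (auxLi_deriv (x := 1-x) (by linarith) (by linarith)).comp x d0
      have d3 := (Real.hasDerivAt_log hx0.ne').mul (d0.log hx2)
      have := (d1.add d2).add d3
      refine aux_hd this (fun _ => ?_) ?_
      · rfl
      rw [sub_sub_cancel]
      field_simp
      ring)
  have z : auxLi 0 = 0 := by simp [auxLi]
  norm_num [z, auxLi_one] at h
  have l : Real.log (1/2) = - Real.log 2 := by rw [one_div, Real.log_inv]
  rw [l] at h
  linarith

theorem aux_int : ∫ θ in (0:ℝ)..(Real.pi/2), Real.arcsin (Real.cos θ / √2) ^ 2 =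
    Real.pi/4 * (Real.pi^2/12 - Real.log 2^2/2) := by
  rw [← auxLi_half, ← aux_step3.tsum_eq, tsum_mul_left, auxLi]

def auxA (t : ℝ) : ℝ := Real.arctan (√2*t+1) + Real.arctan (√2*t-1)
def auxA' (t : ℝ) : ℝ := √2*(1+t^2)/(1+t^4)
def auxB (t : ℝ) : ℝ := Real.arctan (t^2)
def auxB' (t : ℝ) : ℝ := 2*t/(1+t^4)

theorem auxA_deriv (t : ℝ) : HasDerivAt auxA (auxA' t) t := by
  have h0 : HasDerivAt (fun t => √2 * t) √2 t := by simpa using (hasDerivAt_id t).const_mul √2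
  have h := ((h0.add_const 1).arctan).add ((h0.sub_const 1).arctan)
  refine aux_hd h (fun _ => ?_) ?_
  · rfl
  have h22 : √2 ^ 2 = 2 := Real.sq_sqrt (by norm_num)
  have : (1+(√2*t+1)^2)*(1+(√2*t-1)^2) = 4*(1+t^4) := by
    linear_combination (t^4*(√2^2+2)) * h22
  have p : 0 < 1+t^4 := by positivity
  have p1 : 0 < 1+(√2*t+1)^2 := by positivity
  have p2 : 0 < 1+(√2*t-1)^2 := by positivity
  unfold auxA'
  rw [show 1 / (1+(√2*t+1)^2) * √2 + 1 / (1+(√2*t-1)^2) * √2 =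
    √2 * (4 + 2*√2^2*t^2)/((1+(√2*t+1)^2)*(1+(√2*t-1)^2)) by field_simp; ring, this, h22]
  field_simp
  ring

theorem auxB_deriv (t : ℝ) : HasDerivAt auxB (auxB' t) t := by
  have h := (hasDerivAt_pow 2 t).arctan
  refine aux_hd h (fun _ => ?_) ?_
  · rfl
  unfold auxB'
  simp
  ring

theorem auxA'_cont : Continuous auxA' := by
  unfold auxA'
  exact Continuous.div (by fun_prop) (by fun_prop) (fun t => by positivity)

theorem auxB'_cont : Continuous auxB' := by
  unfold auxB'
  exact Continuous.div (by fun_prop) (by fun_prop) (fun t => by positivity)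

theorem auxA_zero : auxA 0 = 0 := by simp [auxA]

theorem auxA_one : auxA 1 = Real.pi/2 := by
  have h22 : √2 ^ 2 = 2 := Real.sq_sqrt (by norm_num)
  have h2 : (0:ℝ) < √2 := by positivity
  have : √2 - 1 = (√2+1)⁻¹ := by
    apply eq_inv_of_mul_eq_one_left; linarith
  unfold auxA
  rw [mul_one, this, Real.arctan_inv_of_pos (by positivity)]
  ring

theorem aux_arcsin (t : ℝ) : Real.arcsin (Real.cos (auxA t) / √2) = Real.pi/4 - auxB t := by
  have hp := Real.pi_pos
  have h22 : √2 ^ 2 = 2 := Real.sq_sqrt (by norm_num)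
  have h2 : (0:ℝ) < √2 := by positivity
  have hB1 : 0 ≤ auxB t := Real.arctan_nonneg.mpr (sq_nonneg t)
  have hB2 : auxB t < Real.pi/2 := Real.arctan_lt_pi_div_two _
  rw [← Real.arcsin_sin (x := Real.pi/4 - auxB t) (by linarith) (by linarith)]
  congr 1
  rw [Real.sin_sub, Real.sin_pi_div_four, Real.cos_pi_div_four]
  unfold auxA auxB
  rw [Real.cos_add, Real.cos_arctan, Real.cos_arctan, Real.sin_arctan, Real.sin_arctan,
    Real.cos_arctan, Real.sin_arctan]
  have e : √(1+(√2*t+1)^2)*√(1+(√2*t-1)^2) = 2*√(1+(t^2)^2) := by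
    rw [← Real.sqrt_mul (by positivity)]
    have : (1+(√2*t+1)^2)*(1+(√2*t-1)^2) = 2^2*(1+(t^2)^2) := by
      linear_combination (t^4*(√2^2+2)) * h22
    rw [this, Real.sqrt_mul (by positivity), Real.sqrt_sq (by norm_num)]
  have q1 : 0 < √(1+(√2*t+1)^2) := Real.sqrt_pos.mpr (by positivity)
  have q2 : 0 < √(1+(√2*t-1)^2) := Real.sqrt_pos.mpr (by positivity)
  have q3 : 0 < √(1+(t^2)^2) := Real.sqrt_pos.mpr (by positivity)
  rw [show 1 / √(1+(√2*t+1)^2) * (1/√(1+(√2*t-1)^2)) -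
      (√2*t+1) / √(1+(√2*t+1)^2) * ((√2*t-1)/√(1+(√2*t-1)^2)) =
      (2 - √2^2*t^2) / (√(1+(√2*t+1)^2)*√(1+(√2*t-1)^2)) by field_simp; ring, e, h22]
  field_simp
  rw [h22]; ring

theorem aux_real : ∫ z in (0:ℝ)..1, (∫ t in (0:ℝ)..z, auxA t * auxB' t) * auxB' z =
    1/2 * (Real.pi/4 * (Real.pi^2/12 - Real.log 2^2/2)) := by
  have hA : Continuous auxA := continuous_iff_continuousAt.mpr fun t => (auxA_deriv t).continuousAt
  have hB : Continuous auxB := continuous_iff_continuousAt.mpr fun t => (auxB_deriv t).continuousAt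
  have hA' := auxA'_cont
  have hB' := auxB'_cont
  have hAB : Continuous (fun t => auxA t * auxB' t) := hA.mul hB'
  set K : ℝ → ℝ := fun z => ∫ t in (0:ℝ)..z, auxA t * auxB' t with hK
  have dK : ∀ z, HasDerivAt K (auxA z * auxB' z) z := fun z =>
    intervalIntegral.integral_hasDerivAt_right (hAB.intervalIntegrable _ _)
      hAB.stronglyMeasurable.stronglyMeasurableAtFilter hAB.continuousAt
  have hKc : Continuous K := continuous_iff_continuousAt.mpr fun t => (dK t).continuousAt
  have sub : ∫ z in (0:ℝ)..1, (Real.pi/4 - auxB z)^2 * auxA' z =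
      ∫ θ in (0:ℝ)..(Real.pi/2), Real.arcsin (Real.cos θ / √2) ^ 2 := by
    have hg : Continuous (fun θ => Real.arcsin (Real.cos θ / √2) ^ 2) := by
      have : Continuous (fun θ => Real.cos θ / √2) := by fun_prop
      exact (Real.continuous_arcsin.comp this).pow 2
    have := intervalIntegral.integral_comp_mul_deriv (a := 0) (b := 1) (f' := auxA')
      (fun x _ => auxA_deriv x) hA'.continuousOn hg
    rw [auxA_zero, auxA_one] at this
    rw [← this]
    congr 1; funext z
    simp only [Function.comp, aux_arcsin]
  have ftc : ∫ z in (0:ℝ)..1, (K z * auxB' z - 1/2 * ((Real.pi/4 - auxB z)^2 * auxA' z)) = 0 := by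
    rw [intervalIntegral.integral_eq_sub_of_hasDerivAt
      (f := fun z => K z * (auxB z - Real.pi/4) - auxA z * (Real.pi/4 - auxB z)^2 / 2)]
    · have b1 : auxB 1 = Real.pi/4 := by simp [auxB]
      simp [b1, auxA_zero, hK]
    · intro z _
      have h := ((dK z).mul ((auxB_deriv z).sub_const (Real.pi/4))).sub
        (((auxA_deriv z).mul (((auxB_deriv z).const_sub (Real.pi/4)).pow 2)).div_const 2)
      refine aux_hd h (fun _ => ?_) ?_
      · rfl
      simp
      ring
    · apply Continuous.intervalIntegrable
      fun_prop
  rw [intervalIntegral.integral_sub (Continuous.intervalIntegrable (by fun_prop) _ _)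
    (Continuous.intervalIntegrable (by fun_prop) _ _), intervalIntegral.integral_const_mul, sub,
    aux_int] at ftc
  linarith

theorem aux_p₁ : p₁ = ((√2/2 : ℝ) : ℂ) * (1 + Complex.I) := by
  unfold p₁
  rw [mul_comm, show ((Real.pi:ℂ)/4) = ((Real.pi/4 : ℝ):ℂ) by push_cast; rfl, Complex.exp_mul_I,
    ← Complex.ofReal_cos, ← Complex.ofReal_sin, Real.cos_pi_div_four, Real.sin_pi_div_four]
  ring

theorem aux_p₂ : p₂ = ((√2/2 : ℝ) : ℂ) * (-1 + Complex.I) := by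
  unfold p₂
  rw [mul_comm, ← neg_mul, show (-((Real.pi:ℂ)/4)) = ((-(Real.pi/4) : ℝ):ℂ) by push_cast; rfl, Complex.exp_mul_I,
    ← Complex.ofReal_cos, ← Complex.ofReal_sin, Real.cos_neg, Real.sin_neg, Real.cos_pi_div_four, Real.sin_pi_div_four]
  push_cast
  ring

theorem aux_nz (t : ℝ) : ((t:ℂ) - p₁ ≠ 0 ∧ (t:ℂ) - p₂ ≠ 0) ∧ ((t:ℂ) - p₃ ≠ 0 ∧ (t:ℂ) - p₄ ≠ 0) := by
  have h2 : (√2:ℝ) ≠ 0 := by positivity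
  unfold p₃ p₄
  rw [aux_p₁, aux_p₂]
  refine ⟨⟨?_, ?_⟩, ?_, ?_⟩ <;> intro h <;> have := congrArg Complex.im h <;>
    simp at this

theorem aux_F₃ (t : ℝ) : F₃ t = 2 * Complex.I * (auxA' t : ℂ) := by
  obtain ⟨⟨h1, h2⟩, h3, h4⟩ := aux_nz t
  have s2 : ((√2:ℝ):ℂ)^2 = 2 := by exact_mod_cast Real.sq_sqrt (by norm_num : (0:ℝ) ≤ 2)
  have hI := Complex.I_sq
  have q1 : p₁^2 = Complex.I := by
    rw [aux_p₁]; push_cast; linear_combination (Complex.I/2) * s2 + ((√2:ℝ):ℂ)^2/4 * hI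
  have q2 : p₂^2 = -Complex.I := by
    rw [aux_p₂]; push_cast; linear_combination (-Complex.I/2) * s2 + ((√2:ℝ):ℂ)^2/4 * hI
  have d : (1 + (t:ℂ)^4) ≠ 0 := by
    have : (1 + t^4 : ℝ) ≠ 0 := by positivity
    exact_mod_cast this
  have e1 : ((t:ℂ) - p₁)*((t:ℂ) - p₃) = t^2 - Complex.I := by unfold p₃; linear_combination -q1
  have e2 : ((t:ℂ) - p₂)*((t:ℂ) - p₄) = t^2 + Complex.I := by unfold p₄; linear_combination -q2
  have n1 : (t:ℂ)^2 - Complex.I ≠ 0 := e1 ▸ mul_ne_zero h1 h3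
  have n2 : (t:ℂ)^2 + Complex.I ≠ 0 := e2 ▸ mul_ne_zero h2 h4
  have f1 : 1/((t:ℂ) - p₁) - 1/((t:ℂ) - p₃) = 2*p₁/(t^2 - Complex.I) := by
    rw [← e1]; field_simp; unfold p₃; ring
  have f2 : 1/((t:ℂ) - p₂) - 1/((t:ℂ) - p₄) = 2*p₂/(t^2 + Complex.I) := by
    rw [← e2]; field_simp; unfold p₄; ring
  have f : F₃ t = 2*p₁/(t^2 - Complex.I) + 2*p₂/(t^2 + Complex.I) := by
    rw [← f1, ← f2]; unfold F₃; ring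
  rw [f, div_add_div _ _ n1 n2, show ((t:ℂ)^2 - Complex.I) * (t^2 + Complex.I) = 1 + t^4 by
    linear_combination -hI, aux_p₁, aux_p₂]
  unfold auxA'
  push_cast
  field_simp
  linear_combination (0:ℂ) * hI

theorem aux_F₁ (t : ℝ) : F₁ t = 2 * Complex.I * (auxB' t : ℂ) := by
  obtain ⟨⟨h1, h2⟩, h3, h4⟩ := aux_nz t
  have s2 : ((√2:ℝ):ℂ)^2 = 2 := by exact_mod_cast Real.sq_sqrt (by norm_num : (0:ℝ) ≤ 2)
  have hI := Complex.I_sq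
  have q1 : p₁^2 = Complex.I := by
    rw [aux_p₁]; push_cast; linear_combination (Complex.I/2) * s2 + ((√2:ℝ):ℂ)^2/4 * hI
  have q2 : p₂^2 = -Complex.I := by
    rw [aux_p₂]; push_cast; linear_combination (-Complex.I/2) * s2 + ((√2:ℝ):ℂ)^2/4 * hI
  have d : (1 + (t:ℂ)^4) ≠ 0 := by
    have : (1 + t^4 : ℝ) ≠ 0 := by positivity
    exact_mod_cast this
  have e1 : ((t:ℂ) - p₁)*((t:ℂ) - p₃) = t^2 - Complex.I := by unfold p₃; linear_combination -q1
  have e2 : ((t:ℂ) - p₂)*((t:ℂ) - p₄) = t^2 + Complex.I := by unfold p₄; linear_combination -q2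
  have n1 : (t:ℂ)^2 - Complex.I ≠ 0 := e1 ▸ mul_ne_zero h1 h3
  have n2 : (t:ℂ)^2 + Complex.I ≠ 0 := e2 ▸ mul_ne_zero h2 h4
  have f1 : 1/((t:ℂ) - p₁) + 1/((t:ℂ) - p₃) = 2*t/(t^2 - Complex.I) := by
    rw [← e1]; field_simp; unfold p₃; ring
  have f2 : 1/((t:ℂ) - p₂) + 1/((t:ℂ) - p₄) = 2*t/(t^2 + Complex.I) := by
    rw [← e2]; field_simp; unfold p₄; ring
  have f : F₁ t = 2*t/(t^2 - Complex.I) - 2*t/(t^2 + Complex.I) := by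
    rw [← f1, ← f2]; unfold F₁; ring
  rw [f, div_sub_div _ _ n1 n2, show ((t:ℂ)^2 - Complex.I) * (t^2 + Complex.I) = 1 + t^4 by
    linear_combination -hI]
  unfold auxB'
  push_cast
  field_simp
  ring

/- STATEMENT 12: `Ω_{3,1,1} = (iπ/2)(log 2)² - iπ³/12`. -/
theorem stmt_12 :
    Omega [F₃, F₁, F₁] 1 =
      Complex.I * (Real.pi : ℂ) / 2 * ((Real.log 2 : ℝ) : ℂ) ^ 2 -
        Complex.I * (Real.pi : ℂ) ^ 3 / 12 := by
  simp only [Omega, List.foldl_cons, List.foldl_nil, aux_F₁, aux_F₃]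
  have s1 : ∀ z : ℝ, ∫ t in (0:ℝ)..z, (1:ℂ) * (2 * Complex.I * (auxA' t : ℂ)) = 2 * Complex.I * (auxA z : ℂ) := by
    intro z
    simp only [one_mul]
    rw [intervalIntegral.integral_const_mul, intervalIntegral.integral_ofReal,
      intervalIntegral.integral_eq_sub_of_hasDerivAt (fun x _ => auxA_deriv x)
        (auxA'_cont.intervalIntegrable _ _), auxA_zero, sub_zero]
  simp only [s1]
  have s2 : ∀ z : ℝ, ∫ t in (0:ℝ)..z, (2 * Complex.I * (auxA t : ℂ)) * (2 * Complex.I * (auxB' t : ℂ))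
      = -4 * ((∫ t in (0:ℝ)..z, auxA t * auxB' t : ℝ) : ℂ) := by
    intro z
    rw [← intervalIntegral.integral_ofReal, ← intervalIntegral.integral_const_mul]
    congr 1; funext t
    push_cast
    linear_combination 4 * (auxA t : ℂ) * (auxB' t : ℂ) * Complex.I_sq
  simp only [s2]
  have s3 : ∫ z in (0:ℝ)..1, (-4 * ((∫ t in (0:ℝ)..z, auxA t * auxB' t : ℝ) : ℂ)) * (2 * Complex.I * (auxB' z : ℂ))
      = -8 * Complex.I * ((∫ z in (0:ℝ)..1, (∫ t in (0:ℝ)..z, auxA t * auxB' t) * auxB' z : ℝ) : ℂ) := by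
    rw [← intervalIntegral.integral_ofReal, ← intervalIntegral.integral_const_mul]
    congr 1; funext t
    push_cast
    ring
  rw [s3, aux_real]
  push_cast
  ring
end
end
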